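/- arXiv:1602.07004 — 3 statements merged into one kernel-verified Lean document; each statement's English description precedes it below -/
import Mathlib

section
/- Let β ∈ (0,1) and let μ be a tempered Borel measure on ℝ^d with ∫_{ℝ^d} (1/(1+|ξ|²))^β μ(dξ) < ∞, whose Fourier transform in the Parseval sense is a locally integrable function f : ℝ^d → [0,∞] with f(x) < ∞ for every x ≠ 0. Then for any T > 0 and any compact set K ⊂ ℝ^d there exists a constant C > 0 (depending on T, K, d, β) such that for every z ∈ K, sup_{t ∈ [0,T]} sup_{η ∈ ℝ^d} ∫_{ℝ^d} (sin(t|ξ+η|)/|ξ+η|)² · |1 − e^{−i(ξ+η)·z}|² μ(dξ) ≤ C |z|^{2−2β}, where sin(t r)/r is interpreted as t when r = 0. -/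
/-!
With `v = ξ + η`, the elementary bounds `sinc² ≤ (1 + T²) / (1 + |v|²)` and
`|1 - e^{-i v·z}|² ≤ 4 (|v| |z|)^{2-2β}` show that the integrand is at most
`4 (1 + T²) |z|^{2-2β} (1 + |v|²)^{-β}` (`integrand_le`). Everything therefore reduces to a bound,
uniform in `η`, on `∫ (1 + |ξ + η|²)^{-β} μ(dξ)`, and in fact this integral is at most its value at
`η = 0` (`lintegral_bessel_shift_le`); this is where the nonnegativity of `f` enters.

The Gamma integral `Γ(β) r^{-β} = ∫_0^∞ s^{β-1} e^{-r s} ds` with `r = 1 + |ξ + η|²` writes the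
Bessel weight as a superposition of Gaussians `e^{-s |ξ + η|²}`, so by Tonelli it suffices to
compare Gaussians (`integral_gaussian_shift_le`). Up to a factor independent of `η`, the function
`ξ ↦ e^{-s |ξ + η|²}` is the Fourier transform of the modulated Gaussian
`φ_η(x) = e^{-|x|²/(4s) - i η·x}`. The Parseval identity turns the Gaussian integral against `μ`
into `∫ φ_η f`, and since `f ≥ 0` and `|φ_η| = φ_0`, it follows that
`|∫ φ_η f| ≤ ∫ φ_0 f`.
-/

open MeasureTheory Real
open scoped ENNReal RealInnerProductSpace

noncomputable section

/-- Euclidean space `ℝ^d`. -/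
abbrev Ed (d : ℕ) := EuclideanSpace ℝ (Fin d)

/-- Fourier transform on `ℝ^d`: `ℱφ(ξ) = ∫ e^{-i ξ·x} φ(x) dx`. -/
def FTd (d : ℕ) (φ : Ed d → ℂ) (ξ : Ed d) : ℂ :=
  ∫ x : Ed d, Complex.exp (-(Complex.I * ((⟪ξ, x⟫ : ℝ) : ℂ))) * φ x

/-- A Borel measure on `ℝ^d` is tempered if `∫ (1+|ξ|²)^{-k} dμ < ∞` for some `k ∈ ℕ`. -/
def IsTempered (d : ℕ) (μ : Measure (Ed d)) : Prop :=
  ∃ k : ℕ, ∫⁻ ξ, ENNReal.ofReal ((1 + ‖ξ‖ ^ 2) ^ (-(k : ℝ))) ∂μ < ⊤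

/-- Local integrability for `[0,∞]`-valued functions on `ℝ^d`. -/
def LocIntENN (d : ℕ) (g : Ed d → ℝ≥0∞) : Prop :=
  ∀ s : Set (Ed d), IsCompact s → ∫⁻ x in s, g x < ⊤

/-- `g` is the Fourier transform of `μ` in the Parseval sense:
`∫ φ(x) g(x) dx = (2π)^{-d} ∫ ℱφ(ξ) μ(dξ)` for every Schwartz function `φ` on `ℝ^d`. -/
def ParsevalFT (d : ℕ) (g : Ed d → ℝ≥0∞) (μ : Measure (Ed d)) : Prop :=
  ∀ φ : SchwartzMap (Ed d) ℂ,
    ∫ x, φ x * (((g x).toReal : ℝ) : ℂ) =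
      (((2 * π) ^ d : ℝ)⁻¹ : ℂ) * ∫ ξ, FTd d (fun y => φ y) ξ ∂μ

/-- `sinc a r = sin(a r)/r`, interpreted as `a` when `r = 0`. -/
def sinc (a r : ℝ) : ℝ := if r = 0 then a else Real.sin (a * r) / r

/-! ### Pointwise bound on the integrand -/

theorem sinc_sq_mul_le {t T r : ℝ} (ht : t ∈ Set.Icc 0 T) :
    (_root_.sinc t r) ^ 2 * (1 + r ^ 2) ≤ 1 + T ^ 2 := by
  have ht2 : t ^ 2 ≤ T ^ 2 := pow_le_pow_left₀ ht.1 ht.2 2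
  unfold _root_.sinc
  split_ifs with h
  · subst h
    nlinarith
  · have h1 : Real.sin (t * r) ^ 2 ≤ 1 := Real.sin_sq_le_one _
    have h2 : (Real.sin (t * r) / r) ^ 2 ≤ t ^ 2 := by
      rw [div_pow, div_le_iff₀ (by positivity), ← mul_pow]
      exact Real.sin_sq_le_sq
    have h3 : (Real.sin (t * r) / r) ^ 2 * r ^ 2 ≤ 1 := by
      rw [← mul_pow, div_mul_cancel₀ _ h]
      exact h1
    nlinarith

theorem norm_one_sub_exp_sq_le {d : ℕ} {β : ℝ} (hβ : β ∈ Set.Ioo (0 : ℝ) 1) (v z : Ed d) :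
    ‖(1 : ℂ) - Complex.exp (-(Complex.I * ((⟪v, z⟫ : ℝ) : ℂ)))‖ ^ 2 ≤
      4 * ‖z‖ ^ (2 - 2 * β) * (1 + ‖v‖ ^ 2) ^ (1 - β) := by
  obtain ⟨h0, h1⟩ := hβ
  have e : -(Complex.I * ((⟪v, z⟫ : ℝ) : ℂ)) = Complex.I * ((-⟪v, z⟫ : ℝ) : ℂ) := by
    push_cast; ring
  rw [norm_sub_rev, e]
  set n := ‖Complex.exp (Complex.I * ((-⟪v, z⟫ : ℝ) : ℂ)) - 1‖ with hn
  have hn0 : 0 ≤ n := norm_nonneg _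
  have hA : n ≤ ‖v‖ * ‖z‖ := by
    refine (Real.norm_exp_I_mul_ofReal_sub_one_le).trans ?_
    rw [norm_neg]
    exact norm_inner_le_norm v z
  have hB : n ≤ 2 := by
    refine (norm_sub_le _ _).trans ?_
    rw [mul_comm, Complex.norm_exp_ofReal_mul_I]
    norm_num
  -- As `n / 2 ∈ [0, 1]`, lowering the exponent from `2` to `2 - 2β` can only increase the power.
  have hC : n ^ 2 ≤ 4 * (‖v‖ * ‖z‖) ^ (2 - 2 * β) := by
    have key : (n / 2) ^ (2 : ℝ) ≤ (n / 2) ^ (2 - 2 * β) :=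
      Real.rpow_le_rpow_of_exponent_ge' (by positivity) (by linarith) (by linarith) (by linarith)
    have key2 : (n / 2) ^ (2 - 2 * β) ≤ (‖v‖ * ‖z‖) ^ (2 - 2 * β) :=
      Real.rpow_le_rpow (by positivity) (by linarith) (by linarith)
    rw [Real.rpow_two] at key
    nlinarith
  refine hC.trans ?_
  have hD : ‖v‖ ^ (2 - 2 * β) ≤ (1 + ‖v‖ ^ 2) ^ (1 - β) := by
    have : 2 - 2 * β = (2 : ℝ) * (1 - β) := by ring
    rw [this, Real.rpow_mul (norm_nonneg _), Real.rpow_two]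
    exact Real.rpow_le_rpow (by positivity) (by linarith) (by linarith)
  rw [Real.mul_rpow (norm_nonneg _) (norm_nonneg _), mul_assoc, mul_comm (‖v‖ ^ _)]
  gcongr

theorem integrand_le {d : ℕ} {β : ℝ} (hβ : β ∈ Set.Ioo (0 : ℝ) 1) {t T : ℝ}
    (ht : t ∈ Set.Icc 0 T) (v z : Ed d) :
    (_root_.sinc t ‖v‖) ^ 2 * ‖(1 : ℂ) - Complex.exp (-(Complex.I * ((⟪v, z⟫ : ℝ) : ℂ)))‖ ^ 2 ≤
      4 * (1 + T ^ 2) * ‖z‖ ^ (2 - 2 * β) * (1 / (1 + ‖v‖ ^ 2)) ^ β := by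
  have hr : 0 < 1 + ‖v‖ ^ 2 := by positivity
  have e : (1 + ‖v‖ ^ 2) ^ (1 - β) = (1 + ‖v‖ ^ 2) * (1 / (1 + ‖v‖ ^ 2)) ^ β := by
    rw [Real.rpow_sub hr, Real.rpow_one, Real.div_rpow zero_le_one hr.le, Real.one_rpow]
    ring
  calc _ ≤ (_root_.sinc t ‖v‖) ^ 2 * (4 * ‖z‖ ^ (2 - 2 * β) * (1 + ‖v‖ ^ 2) ^ (1 - β)) := by
        gcongr
        exact norm_one_sub_exp_sq_le hβ v z
    _ = 4 * ((_root_.sinc t ‖v‖) ^ 2 * (1 + ‖v‖ ^ 2)) * ‖z‖ ^ (2 - 2 * β) *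
        (1 / (1 + ‖v‖ ^ 2)) ^ β := by rw [e]; ring
    _ ≤ _ := by
        gcongr
        exact sinc_sq_mul_le ht

/-! ### Modulated Gaussians as Schwartz functions -/

/-- Gaussian decay beats polynomial growth, with an explicit constant coming from
`(1 + r)^N ≤ N! e^{1+r}` and completing the square. -/
theorem one_add_pow_mul_exp_neg_sq_le {b : ℝ} (hb : 0 < b) (N : ℕ) {r : ℝ} (hr : 0 ≤ r) :
    (1 + r) ^ N * rexp (-b * r ^ 2) ≤ N.factorial * rexp (1 + 1 / (4 * b)) := by
  have h1 : (1 + r) ^ N ≤ N.factorial * rexp (1 + r) := by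
    have h := Real.pow_div_factorial_le_exp (1 + r) (by positivity) N
    rwa [div_le_iff₀ (by positivity), mul_comm] at h
  have h2 : 1 + r + -b * r ^ 2 ≤ 1 + 1 / (4 * b) := by
    have h3 : 1 / (4 * b) - r + b * r ^ 2 = b * (r - 1 / (2 * b)) ^ 2 := by
      field_simp
      ring
    have h4 : 0 ≤ b * (r - 1 / (2 * b)) ^ 2 := by positivity
    linarith
  calc (1 + r) ^ N * rexp (-b * r ^ 2)
      ≤ (N.factorial * rexp (1 + r)) * rexp (-b * r ^ 2) := by gcongr
    _ = N.factorial * rexp (1 + r + -b * r ^ 2) := by rw [mul_assoc, ← Real.exp_add]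
    _ ≤ _ := by gcongr

/-- The derivatives here are real ones, since Schwartz functions on `ℝ^d` are differentiated
over `ℝ`. -/
theorem norm_iteratedFDeriv_cexp (n : ℕ) (z : ℂ) :
    ‖iteratedFDeriv ℝ n Complex.exp z‖ = rexp z.re := by
  have h := (Complex.contDiff_exp (𝕜 := ℂ) (n := n)).contDiffAt (x := z)
  rw [← h.restrictScalars_iteratedFDeriv (𝕜 := ℝ)]
  have : ‖iteratedFDeriv ℂ n Complex.exp z‖ = rexp z.re := by
    rw [norm_iteratedFDeriv_eq_norm_iteratedDeriv, iteratedDeriv_eq_iterate, Complex.iter_deriv_exp,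
      Complex.norm_exp]
  simpa using this

/-- The modulated Gaussian `e^{-b|x|² - i η·x}` is a Schwartz function. It is the complex
exponential composed with a polynomial `q`: at each point the derivatives of the exponential have
size `e^{-b|x|²}`, while those of `q` grow polynomially. -/
theorem exists_schwartz_gaussian {d : ℕ} {b : ℝ} (hb : 0 < b) (η : Ed d) :
    ∃ φ : SchwartzMap (Ed d) ℂ, ∀ x, φ x =
      Complex.exp (-(b : ℂ) * (‖x‖ : ℂ) ^ 2 - Complex.I * ((⟪η, x⟫ : ℝ) : ℂ)) := by
  set q : Ed d → ℂ := fun x =>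
    -(b : ℂ) * ((‖x‖ ^ 2 : ℝ) : ℂ) - Complex.I * ((⟪η, x⟫ : ℝ) : ℂ) with hq
  have hqt : q.HasTemperateGrowth := by
    have h1 : (fun x : Ed d => ((‖x‖ ^ 2 : ℝ) : ℂ)).HasTemperateGrowth :=
      Function.Complex.hasTemperateGrowth_ofReal.comp (Function.hasTemperateGrowth_norm_sq _)
    have h2 : (fun x : Ed d => ((⟪η, x⟫ : ℝ) : ℂ)).HasTemperateGrowth :=
      Function.Complex.hasTemperateGrowth_ofReal.comp
        (Function.hasTemperateGrowth_inner_right η)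
    exact ((Function.HasTemperateGrowth.const _).mul h1).sub
      ((Function.HasTemperateGrowth.const _).mul h2)
  have hre : ∀ x, (q x).re = -b * ‖x‖ ^ 2 := by
    intro x
    simp [hq, -Complex.ofReal_pow]
  have hexp : ContDiff ℝ (⊤ : ℕ∞) Complex.exp := Complex.contDiff_exp
  refine ⟨⟨Complex.exp ∘ q, hexp.comp hqt.1, ?_⟩, fun x => by
    change Complex.exp (q x) = _
    simp [hq]⟩
  intro k n
  obtain ⟨m, C, hC, hbd⟩ := hqt.norm_iteratedFDeriv_le_uniform n
  refine ⟨n.factorial * (1 + C) ^ n *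
    ((k + m * n).factorial * rexp (1 + 1 / (4 * b))), fun x => ?_⟩
  have hD : ∀ i, 1 ≤ i → i ≤ n →
      ‖iteratedFDeriv ℝ i q x‖ ≤ ((1 + C) * (1 + ‖x‖) ^ m) ^ i := by
    intro i hi hi'
    have hx1 : 1 ≤ (1 + ‖x‖) ^ m := one_le_pow₀ (by simp)
    calc _ ≤ C * (1 + ‖x‖) ^ m := hbd i hi' x
      _ ≤ (1 + C) * (1 + ‖x‖) ^ m := by gcongr; simp
      _ ≤ _ := le_self_pow₀ (one_le_mul_of_one_le_of_one_le (by linarith) hx1) (by omega)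
  have hmain := norm_iteratedFDeriv_comp_le (n := n) hexp hqt.1 (mod_cast le_top) x
    (fun i _ => (norm_iteratedFDeriv_cexp i (q x)).le) hD
  rw [hre] at hmain
  calc ‖x‖ ^ k * ‖iteratedFDeriv ℝ n (Complex.exp ∘ q) x‖
      ≤ (1 + ‖x‖) ^ k *
        (n.factorial * rexp (-b * ‖x‖ ^ 2) * ((1 + C) * (1 + ‖x‖) ^ m) ^ n) := by
        gcongr
        linarith
    _ = n.factorial * (1 + C) ^ n * ((1 + ‖x‖) ^ (k + m * n) * rexp (-b * ‖x‖ ^ 2)) := by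
        rw [mul_pow, ← pow_mul, pow_add]; ring
    _ ≤ _ := by
        refine mul_le_mul_of_nonneg_left ?_ (by positivity)
        exact one_add_pow_mul_exp_neg_sq_le hb _ (norm_nonneg x)

/-! ### Translates of Gaussians under the spectral measure -/

/-- The Fourier transform of the modulated Gaussian `e^{-|x|²/(4s) - i η·x}` is the shifted
Gaussian `e^{-s|ξ+η|²}`, up to a constant that does not depend on `η`. -/
theorem FTd_gaussian {d : ℕ} {s : ℝ} (hs : 0 < s) (η ξ : Ed d) :
    FTd d (fun x => Complex.exp (-((1 / (4 * s) : ℝ) : ℂ) * (‖x‖ : ℂ) ^ 2 -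
      Complex.I * ((⟪η, x⟫ : ℝ) : ℂ))) ξ =
      (π / ((1 / (4 * s) : ℝ) : ℂ)) ^ (d / 2 : ℂ) * ((rexp (-s * ‖ξ + η‖ ^ 2) : ℝ) : ℂ) := by
  have hb : 0 < (((1 / (4 * s) : ℝ) : ℂ)).re := by
    rw [Complex.ofReal_re]; positivity
  have h := GaussianFourier.integral_cexp_neg_mul_sq_norm_add hb (-Complex.I) (ξ + η)
  rw [finrank_euclideanSpace_fin] at h
  have e : Complex.exp ((-Complex.I) ^ 2 * (‖ξ + η‖ : ℂ) ^ 2 / (4 * ((1 / (4 * s) : ℝ) : ℂ))) =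
      ((rexp (-s * ‖ξ + η‖ ^ 2) : ℝ) : ℂ) := by
    have : (s : ℂ) ≠ 0 := by exact_mod_cast hs.ne'
    push_cast
    congr 1
    rw [neg_sq, Complex.I_sq]
    field_simp
  rw [e] at h
  rw [← h, FTd]
  congr 1
  ext x
  rw [← Complex.exp_add, inner_add_left]
  congr 1
  push_cast
  ring

/-- Gaussians are dominated by a multiple of the weight `(1 + |ξ|²)^{-β}`, because
`(1 + |ξ|²)^β ≤ 1 + |ξ|²` and `|ξ|² ≤ 2|ξ+η|² + 2|η|²`. -/
theorem integrable_gaussian {d : ℕ} {β : ℝ} (hβ : β ∈ Set.Ioo (0 : ℝ) 1) {μ : Measure (Ed d)}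
    (hHolder : ∫⁻ ξ, ENNReal.ofReal ((1 / (1 + ‖ξ‖ ^ 2)) ^ β) ∂μ < ⊤)
    {s : ℝ} (hs : 0 < s) (η : Ed d) :
    Integrable (fun ξ : Ed d => rexp (-s * ‖ξ + η‖ ^ 2)) μ := by
  have hint : Integrable (fun ξ : Ed d => (1 / (1 + ‖ξ‖ ^ 2)) ^ β) μ := by
    refine (lintegral_ofReal_ne_top_iff_integrable ?_ ?_).1 hHolder.ne
    · exact Measurable.aestronglyMeasurable (by fun_prop)
    · exact Filter.Eventually.of_forall fun ξ => by positivity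
  refine (hint.const_mul (1 + 2 * ‖η‖ ^ 2 + 2 / s)).mono'
    (Measurable.aestronglyMeasurable (by fun_prop)) (Filter.Eventually.of_forall fun ξ => ?_)
  rw [Real.norm_of_nonneg (Real.exp_pos _).le]
  have hr : 1 ≤ 1 + ‖ξ‖ ^ 2 := by nlinarith [sq_nonneg ‖ξ‖]
  have hr0 : 0 < 1 + ‖ξ‖ ^ 2 := by linarith
  rw [Real.div_rpow zero_le_one hr0.le, Real.one_rpow, ← div_eq_mul_one_div,
    le_div_iff₀ (by positivity)]
  have h1 : (1 + ‖ξ‖ ^ 2) ^ β ≤ 1 + ‖ξ‖ ^ 2 := by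
    simpa using Real.rpow_le_rpow_of_exponent_le hr hβ.2.le
  have h2 : ‖ξ‖ ^ 2 ≤ 2 * ‖ξ + η‖ ^ 2 + 2 * ‖η‖ ^ 2 := by
    have h3 : ‖ξ‖ ≤ ‖ξ + η‖ + ‖η‖ := by simpa using norm_sub_le (ξ + η) η
    nlinarith [sq_nonneg (‖ξ + η‖ - ‖η‖), norm_nonneg ξ]
  have h4 : rexp (-s * ‖ξ + η‖ ^ 2) ≤ 1 := Real.exp_le_one_iff.2 (by
    have : 0 ≤ s * ‖ξ + η‖ ^ 2 := by positivity
    linarith)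
  have h5 : rexp (-s * ‖ξ + η‖ ^ 2) * ‖ξ + η‖ ^ 2 ≤ 1 / s := by
    rw [le_div_iff₀ hs]
    have h6 := Real.add_one_le_exp (s * ‖ξ + η‖ ^ 2)
    have h7 : rexp (-s * ‖ξ + η‖ ^ 2) * rexp (s * ‖ξ + η‖ ^ 2) = 1 := by
      rw [← Real.exp_add]; simp
    nlinarith [Real.exp_pos (-s * ‖ξ + η‖ ^ 2)]
  calc rexp (-s * ‖ξ + η‖ ^ 2) * (1 + ‖ξ‖ ^ 2) ^ β
      ≤ rexp (-s * ‖ξ + η‖ ^ 2) * (1 + 2 * ‖η‖ ^ 2 + 2 * ‖ξ + η‖ ^ 2) := by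
        gcongr
        linarith
    _ = rexp (-s * ‖ξ + η‖ ^ 2) * (1 + 2 * ‖η‖ ^ 2) +
        2 * (rexp (-s * ‖ξ + η‖ ^ 2) * ‖ξ + η‖ ^ 2) := by ring
    _ ≤ 1 * (1 + 2 * ‖η‖ ^ 2) + 2 * (1 / s) := by gcongr
    _ = _ := by ring

/-- A measure whose Fourier transform is a nonnegative function gives the largest mass to the
centred one among all translates of a Gaussian. -/
theorem integral_gaussian_shift_le {d : ℕ} {μ : Measure (Ed d)} {f : Ed d → ℝ≥0∞}
    (hP : ParsevalFT d f μ) {s : ℝ} (hs : 0 < s) (η : Ed d) :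
    ∫ ξ, rexp (-s * ‖ξ + η‖ ^ 2) ∂μ ≤ ∫ ξ, rexp (-s * ‖ξ‖ ^ 2) ∂μ := by
  have hb : 0 < 1 / (4 * s) := by positivity
  set c : ℂ := (((2 * π) ^ d : ℝ)⁻¹ : ℂ) * (π / ((1 / (4 * s) : ℝ) : ℂ)) ^ (d / 2 : ℂ) with hc
  have hc0 : c ≠ 0 := by
    have hπ : (π : ℂ) ≠ 0 := by exact_mod_cast Real.pi_ne_zero
    have hb' : ((1 / (4 * s) : ℝ) : ℂ) ≠ 0 := by exact_mod_cast hb.ne'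
    refine mul_ne_zero (inv_ne_zero ?_) ?_
    · exact_mod_cast (by positivity : (2 * π) ^ d ≠ 0)
    · rw [Ne, Complex.cpow_eq_zero_iff]
      exact fun h => div_ne_zero hπ hb' h.1
  have key : ∀ ζ : Ed d, ∫ x, Complex.exp (-((1 / (4 * s) : ℝ) : ℂ) * (‖x‖ : ℂ) ^ 2 -
      Complex.I * ((⟪ζ, x⟫ : ℝ) : ℂ)) * (((f x).toReal : ℝ) : ℂ) =
      c * ((∫ ξ, rexp (-s * ‖ξ + ζ‖ ^ 2) ∂μ : ℝ) : ℂ) := by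
    intro ζ
    obtain ⟨φ, hφ⟩ := exists_schwartz_gaussian hb ζ
    have h := hP φ
    simp_rw [hφ, FTd_gaussian hs ζ] at h
    rw [h, integral_const_mul, integral_complex_ofReal, hc, mul_assoc]
  have hnorm : ∀ ζ x : Ed d, ‖Complex.exp (-((1 / (4 * s) : ℝ) : ℂ) * (‖x‖ : ℂ) ^ 2 -
      Complex.I * ((⟪ζ, x⟫ : ℝ) : ℂ)) * (((f x).toReal : ℝ) : ℂ)‖ =
      rexp (-(1 / (4 * s)) * ‖x‖ ^ 2) * (f x).toReal := by
    intro ζ x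
    rw [norm_mul, Complex.norm_exp, Complex.norm_of_nonneg ENNReal.toReal_nonneg]
    congr 2
    simp [← Complex.ofReal_pow]
  -- At `η = 0` the integrand is already nonnegative, so the norm of the integral is the integral
  -- of the norm. This and the inequality `hle` below hold even if `φ f` were not integrable, all
  -- the integrals then being `0`.
  have h0 : ‖∫ x, Complex.exp (-((1 / (4 * s) : ℝ) : ℂ) * (‖x‖ : ℂ) ^ 2 -
      Complex.I * ((⟪(0 : Ed d), x⟫ : ℝ) : ℂ)) * (((f x).toReal : ℝ) : ℂ)‖ =
      ∫ x, rexp (-(1 / (4 * s)) * ‖x‖ ^ 2) * (f x).toReal := by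
    rw [← Complex.norm_of_nonneg (integral_nonneg
      (f := fun x => rexp (-(1 / (4 * s)) * ‖x‖ ^ 2) * (f x).toReal) fun x => by positivity),
      ← integral_complex_ofReal]
    congr 2
    ext x
    simp
  have hle := norm_integral_le_integral_norm (μ := volume) fun x : Ed d =>
    Complex.exp (-((1 / (4 * s) : ℝ) : ℂ) * (‖x‖ : ℂ) ^ 2 -
      Complex.I * ((⟪η, x⟫ : ℝ) : ℂ)) * (((f x).toReal : ℝ) : ℂ)
  simp_rw [hnorm] at hle
  rw [← h0, key, key, norm_mul c, norm_mul c] at hle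
  have hle' := le_of_mul_le_mul_left hle (norm_pos_iff.2 hc0)
  rw [Complex.norm_of_nonneg (integral_nonneg fun _ => (Real.exp_pos _).le),
    Complex.norm_of_nonneg (integral_nonneg fun _ => (Real.exp_pos _).le)] at hle'
  simpa using hle'

/-! ### From Gaussians to the Bessel weight -/

theorem lintegral_gamma {β : ℝ} (hβ : 0 < β) {r : ℝ} (hr : 0 < r) :
    ∫⁻ s in Set.Ioi (0 : ℝ), ENNReal.ofReal (s ^ (β - 1) * rexp (-(r * s))) =
      ENNReal.ofReal ((1 / r) ^ β) * ENNReal.ofReal (Real.Gamma β) := by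
  have h := Real.integral_rpow_mul_exp_neg_mul_Ioi hβ hr
  have hG := Real.Gamma_pos_of_pos hβ
  rw [← ENNReal.ofReal_mul (by positivity), ← h]
  refine (ofReal_integral_eq_lintegral_ofReal ?_ ?_).symm
  · exact .of_integral_ne_zero (by rw [h]; positivity)
  · exact (ae_restrict_iff' measurableSet_Ioi).2 (Filter.Eventually.of_forall fun s hs => by
      have : 0 < s := hs
      positivity)

/-- `μ` has a density with respect to the finite measure `(1 + |ξ|²)^{-β} μ`. Tonelli needs
this s-finiteness. -/
theorem sFinite_of_holder {d : ℕ} {β : ℝ} {μ : Measure (Ed d)}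
    (hHolder : ∫⁻ ξ, ENNReal.ofReal ((1 / (1 + ‖ξ‖ ^ 2)) ^ β) ∂μ < ⊤) : SFinite μ := by
  set g : Ed d → ℝ≥0∞ := fun ξ => ENNReal.ofReal ((1 / (1 + ‖ξ‖ ^ 2)) ^ β) with hg
  have hgm : Measurable g := by fun_prop
  have : IsFiniteMeasure (μ.withDensity g) := isFiniteMeasure_withDensity hHolder.ne
  have h := withDensity_inv_same (μ := μ) hgm
    (Filter.Eventually.of_forall fun ξ => by
      have : 0 < (1 / (1 + ‖ξ‖ ^ 2)) ^ β := by positivity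
      simpa [hg] using this)
    (Filter.Eventually.of_forall fun ξ => ENNReal.ofReal_ne_top)
  rw [← h]
  infer_instance

/-- Translating the Bessel weight `(1 + |ξ|²)^{-β}` does not increase its integral against `μ`. -/
theorem lintegral_bessel_shift_le {d : ℕ} {β : ℝ} (hβ : β ∈ Set.Ioo (0 : ℝ) 1)
    {μ : Measure (Ed d)}
    (hHolder : ∫⁻ ξ, ENNReal.ofReal ((1 / (1 + ‖ξ‖ ^ 2)) ^ β) ∂μ < ⊤)
    {f : Ed d → ℝ≥0∞} (hP : ParsevalFT d f μ) (η : Ed d) :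
    ∫⁻ ξ, ENNReal.ofReal ((1 / (1 + ‖ξ + η‖ ^ 2)) ^ β) ∂μ ≤
      ∫⁻ ξ, ENNReal.ofReal ((1 / (1 + ‖ξ‖ ^ 2)) ^ β) ∂μ := by
  have := sFinite_of_holder hHolder
  have hG : ENNReal.ofReal (Real.Gamma β) ≠ 0 := by
    simpa using Real.Gamma_pos_of_pos hβ.1
  have hrep : ∀ ζ : Ed d,
      (∫⁻ ξ, ENNReal.ofReal ((1 / (1 + ‖ξ + ζ‖ ^ 2)) ^ β) ∂μ) * ENNReal.ofReal (Real.Gamma β) =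
      ∫⁻ s in Set.Ioi (0 : ℝ), ENNReal.ofReal (s ^ (β - 1) * rexp (-s)) *
        ENNReal.ofReal (∫ ξ, rexp (-s * ‖ξ + ζ‖ ^ 2) ∂μ) := by
    intro ζ
    rw [← lintegral_mul_const _ (by fun_prop)]
    simp_rw [← fun ξ : Ed d => lintegral_gamma hβ.1 (by positivity : 0 < 1 + ‖ξ + ζ‖ ^ 2)]
    rw [lintegral_lintegral_swap (Measurable.aemeasurable (by fun_prop))]
    refine setLIntegral_congr_fun measurableSet_Ioi fun s hs => ?_
    have hs : 0 < s := hs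
    rw [ofReal_integral_eq_lintegral_ofReal (integrable_gaussian hβ hHolder hs ζ)
      (Filter.Eventually.of_forall fun _ => (Real.exp_pos _).le),
      ← lintegral_const_mul _ (by fun_prop)]
    refine lintegral_congr fun ξ => ?_
    rw [← ENNReal.ofReal_mul (by positivity), mul_assoc, ← Real.exp_add]
    congr 3
    ring
  refine (ENNReal.mul_le_mul_iff_left hG ENNReal.ofReal_ne_top).1 ?_
  have h0 := hrep 0
  simp only [add_zero] at h0
  rw [hrep, h0]
  refine setLIntegral_mono' measurableSet_Ioi fun s hs => ?_
  exact mul_le_mul_right (ENNReal.ofReal_le_ofReal (integral_gaussian_shift_le hP hs η)) _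

/-- Under the Hölder condition `∫ (1+|ξ|²)^{-β} μ(dξ) < ∞` with
`β ∈ (0,1)`: for any `T > 0` and compact `K ⊂ ℝ^d` there is `C > 0` such that for `z ∈ K`,
`sup_{t ∈ [0,T]} sup_η ∫ (sin(t|ξ+η|)/|ξ+η|)² |1 − e^{−i(ξ+η)·z}|² μ(dξ) ≤ C |z|^{2−2β}`. -/
theorem stmt13 (d : ℕ) (β : ℝ) (hβ : β ∈ Set.Ioo (0 : ℝ) 1)
    (μ : Measure (Ed d)) (hμt : IsTempered d μ)
    (hHolder : ∫⁻ ξ, ENNReal.ofReal ((1 / (1 + ‖ξ‖ ^ 2)) ^ β) ∂μ < ⊤)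
    (f : Ed d → ℝ≥0∞) (hfm : Measurable f) (hfloc : LocIntENN d f)
    (hffin : ∀ x : Ed d, x ≠ 0 → f x < ⊤) (hP : ParsevalFT d f μ)
    (T : ℝ) (hT : 0 < T) (K : Set (Ed d)) (hK : IsCompact K) :
    ∃ C : ℝ, 0 < C ∧ ∀ z ∈ K, ∀ t ∈ Set.Icc (0 : ℝ) T, ∀ η : Ed d,
      ∫⁻ ξ, ENNReal.ofReal ((sinc t ‖ξ + η‖) ^ 2 *
          ‖(1 : ℂ) - Complex.exp (-(Complex.I * ((⟪ξ + η, z⟫ : ℝ) : ℂ)))‖ ^ 2) ∂μ ≤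
        ENNReal.ofReal (C * ‖z‖ ^ (2 - 2 * β)) := by
  set M := ∫⁻ ξ, ENNReal.ofReal ((1 / (1 + ‖ξ‖ ^ 2)) ^ β) ∂μ with hM
  -- The summand `1` keeps the constant positive when `μ = 0`.
  refine ⟨4 * (1 + T ^ 2) * (M.toReal + 1), by positivity, fun z _ t ht η => ?_⟩
  calc _ ≤ ∫⁻ ξ, ENNReal.ofReal (4 * (1 + T ^ 2) * ‖z‖ ^ (2 - 2 * β)) *
        ENNReal.ofReal ((1 / (1 + ‖ξ + η‖ ^ 2)) ^ β) ∂μ := by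
        refine lintegral_mono fun ξ => ?_
        rw [← ENNReal.ofReal_mul (by positivity)]
        exact ENNReal.ofReal_le_ofReal (integrand_le hβ ht (ξ + η) z)
    _ = ENNReal.ofReal (4 * (1 + T ^ 2) * ‖z‖ ^ (2 - 2 * β)) *
        ∫⁻ ξ, ENNReal.ofReal ((1 / (1 + ‖ξ + η‖ ^ 2)) ^ β) ∂μ :=
        lintegral_const_mul _ (by fun_prop)
    _ ≤ ENNReal.ofReal (4 * (1 + T ^ 2) * ‖z‖ ^ (2 - 2 * β)) * ENNReal.ofReal (M.toReal + 1) := by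
        gcongr
        refine (lintegral_bessel_shift_le hβ hHolder hP η).trans ?_
        rw [← hM]
        exact ENNReal.le_ofReal_iff_toReal_le hHolder.ne (by positivity) |>.2 (by linarith)
    _ = _ := by
        rw [← ENNReal.ofReal_mul (by positivity)]
        congr 1
        ring
end
end

section
/- For any t > 0, any real h > −1 and any integer n ≥ 1, ∫_{0 < t₁ < … < t_n < t} ∏_{j=1}^{n−1} (t_{j+1} − t_j)^h · (t − t_n)^h dt₁ … dt_n = (Γ(1+h)^n / Γ(n(1+h)+1)) · t^{n(1+h)}, where Γ denotes Euler's Gamma function and the integral is over the simplex {(t₁,…,t_n) : 0 < t₁ < … < t_n < t}. -/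
/-!
Writing `F n t` for the integral over the `n`-dimensional simplex, isolating the largest variable
`s = tₙ₊₁` gives the convolution recursion `F (n+1) t = ∫₀ᵗ (t - s)^h F n s ds`, starting from
`F 0 t = 1`. By induction the integrand is a multiple of `s^{n(1+h)} (t - s)^h`, and Euler's Beta
integral produces the next quotient of Gamma values. All integrands are nonnegative, so the argument
is run with the Lebesgue integral in `ℝ≥0∞`, where Tonelli's theorem (`lintegral_simplexDensity_succ`)
needs no integrability; the Bochner integral is its `toReal`.
-/

open MeasureTheory Real

noncomputable section

/-- The open simplex `0 < u₀ < ⋯ < uₙ₋₁ < t`. -/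
def openSimplex (n : ℕ) (t : ℝ) : Set (Fin n → ℝ) :=
  {u : Fin n → ℝ | StrictMono u ∧ ∀ i, u i ∈ Set.Ioo 0 t}

/-- The product of the `h`-th powers of the consecutive gaps of `u₀, …, uₙ₋₁, t`. -/
def gapProd (h : ℝ) (n : ℕ) (t : ℝ) (u : Fin n → ℝ) : ℝ :=
  ∏ j : Fin n, ((if hj : (j : ℕ) + 1 < n then u ⟨(j : ℕ) + 1, hj⟩ else t) - u j) ^ h

/-- The integrand `gapProd` as an `ℝ≥0∞`-valued function, extended by zero off the simplex. -/
def simplexDensity (h : ℝ) (n : ℕ) (t : ℝ) : (Fin n → ℝ) → ENNReal :=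
  (openSimplex n t).indicator fun u => ENNReal.ofReal (gapProd h n t u)

lemma measurableSet_openSimplex (n : ℕ) (t : ℝ) : MeasurableSet (openSimplex n t) := by
  have : openSimplex n t = (⋂ (i : Fin n) (j : Fin n) (_ : i < j), {u : Fin n → ℝ | u i < u j}) ∩
      ⋂ i : Fin n, (fun u : Fin n → ℝ => u i) ⁻¹' Set.Ioo 0 t := by
    ext u
    simp [openSimplex, StrictMono]
  rw [this]
  refine MeasurableSet.inter ?_ ?_
  · refine MeasurableSet.iInter fun i => MeasurableSet.iInter fun j => MeasurableSet.iInter fun _ => ?_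
    exact measurableSet_lt (measurable_pi_apply i) (measurable_pi_apply j)
  · exact MeasurableSet.iInter fun i => measurable_pi_apply i measurableSet_Ioo

lemma measurable_gapProd (h : ℝ) (n : ℕ) (t : ℝ) : Measurable (gapProd h n t) := by
  unfold gapProd
  refine Finset.measurable_prod _ fun j _ => ?_
  split_ifs <;> fun_prop

lemma measurable_simplexDensity (h : ℝ) (n : ℕ) (t : ℝ) : Measurable (simplexDensity h n t) :=
  (measurable_gapProd h n t).ennreal_ofReal.indicator (measurableSet_openSimplex n t)

lemma gapProd_nonneg (h : ℝ) {n : ℕ} {t : ℝ} {u : Fin n → ℝ} (hu : u ∈ openSimplex n t) :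
    0 ≤ gapProd h n t u := by
  refine Finset.prod_nonneg fun j _ => Real.rpow_nonneg ?_ h
  split_ifs with hj
  · exact sub_nonneg.2 (hu.1 (show j < ⟨j + 1, hj⟩ from Nat.lt_succ_self j)).le
  · exact sub_nonneg.2 (hu.2 j).2.le

lemma gapProd_snoc (h : ℝ) (n : ℕ) (t s : ℝ) (u : Fin n → ℝ) :
    gapProd h (n + 1) t (Fin.snoc u s : Fin (n + 1) → ℝ) = gapProd h n s u * (t - s) ^ h := by
  unfold gapProd
  rw [Fin.prod_univ_castSucc]
  congr 1
  · refine Finset.prod_congr rfl fun j _ => ?_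
    simp [Fin.snoc]
  · simp

lemma snoc_mem_openSimplex {n : ℕ} {t s : ℝ} {u : Fin n → ℝ} :
    (Fin.snoc u s : Fin (n + 1) → ℝ) ∈ openSimplex (n + 1) t ↔
      s ∈ Set.Ioo 0 t ∧ u ∈ openSimplex n s := by
  constructor
  · rintro ⟨hm, hI⟩
    have hs : s ∈ Set.Ioo 0 t := by simpa using hI (Fin.last n)
    refine ⟨hs, fun i j hij => ?_, fun i => ⟨?_, ?_⟩⟩
    · simpa using hm (show i.castSucc < j.castSucc from hij)
    · simpa using (hI i.castSucc).1
    · simpa using hm (Fin.castSucc_lt_last i)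
  · rintro ⟨hs, hm, hI⟩
    refine ⟨fun i j => ?_, fun i => ?_⟩
    · refine Fin.lastCases ?_ (fun j => ?_) j
      · refine Fin.lastCases (by simp) (fun i _ => ?_) i
        simpa using (hI i).2
      · refine Fin.lastCases (fun hij => ?_) (fun i hij => ?_) i
        · exact absurd hij (Fin.castSucc_lt_last j).not_gt
        · simpa using hm (Fin.castSucc_lt_castSucc_iff.1 hij)
    · refine Fin.lastCases (by simpa using hs) (fun i => ?_) i
      simpa using ⟨(hI i).1, (hI i).2.trans hs.2⟩

lemma simplexDensity_snoc (h : ℝ) (n : ℕ) (t s : ℝ) (u : Fin n → ℝ) :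
    simplexDensity h (n + 1) t (Fin.snoc u s : Fin (n + 1) → ℝ) =
      (Set.Ioo 0 t).indicator (fun s => ENNReal.ofReal ((t - s) ^ h)) s *
        simplexDensity h n s u := by
  by_cases hs : s ∈ Set.Ioo 0 t
  · by_cases hu : u ∈ openSimplex n s
    · rw [simplexDensity, simplexDensity, Set.indicator_of_mem (snoc_mem_openSimplex.2 ⟨hs, hu⟩),
        Set.indicator_of_mem hs, Set.indicator_of_mem hu, gapProd_snoc,
        ENNReal.ofReal_mul (gapProd_nonneg h hu), mul_comm]
    · rw [simplexDensity, simplexDensity,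
        Set.indicator_of_notMem (fun H => hu (snoc_mem_openSimplex.1 H).2),
        Set.indicator_of_notMem hu, mul_zero]
  · rw [simplexDensity, Set.indicator_of_notMem (fun H => hs (snoc_mem_openSimplex.1 H).1),
      Set.indicator_of_notMem hs, zero_mul]

lemma lintegral_simplexDensity_succ (h : ℝ) (n : ℕ) (t : ℝ) :
    ∫⁻ u, simplexDensity h (n + 1) t u =
      ∫⁻ s in Set.Ioo 0 t, ENNReal.ofReal ((t - s) ^ h) * ∫⁻ u, simplexDensity h n s u := by
  have hmp := (volume_preserving_piFinSuccAbove (fun _ : Fin (n + 1) => ℝ) (Fin.last n)).symm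
  rw [← hmp.lintegral_comp (measurable_simplexDensity h (n + 1) t), Measure.volume_eq_prod,
    lintegral_prod _ (by
      exact ((measurable_simplexDensity h (n + 1) t).comp
        (MeasurableEquiv.measurable _)).aemeasurable),
    ← lintegral_indicator measurableSet_Ioo]
  refine lintegral_congr fun s => ?_
  have key : ∀ u : Fin n → ℝ, simplexDensity h (n + 1) t
      ((MeasurableEquiv.piFinSuccAbove (fun _ : Fin (n + 1) => ℝ) (Fin.last n)).symm (s, u)) =
      (Set.Ioo 0 t).indicator (fun s => ENNReal.ofReal ((t - s) ^ h)) s *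
        simplexDensity h n s u := by
    intro u
    rw [← simplexDensity_snoc, ← Fin.insertNth_last']
    rfl
  simp_rw [key]
  rw [lintegral_const_mul _ (measurable_simplexDensity h n s)]
  by_cases hs : s ∈ Set.Ioo 0 t <;> simp [hs]

/-- Euler's Beta integral on `(0, t)`, as a Lebesgue integral in `ℝ≥0∞`. -/
lemma lintegral_beta_scaled {t a b : ℝ} (ht : 0 < t) (ha : 0 < a) (hb : 0 < b) :
    ∫⁻ s in Set.Ioo 0 t, ENNReal.ofReal (s ^ (a - 1) * (t - s) ^ (b - 1)) =
      ENNReal.ofReal (t ^ (a + b - 1) * (Gamma a * Gamma b / Gamma (a + b))) := by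
  have hval : ∫ s in Set.Ioo 0 t, s ^ (a - 1) * (t - s) ^ (b - 1) =
      t ^ (a + b - 1) * (Gamma a * Gamma b / Gamma (a + b)) := by
    have hC := Complex.betaIntegral_scaled a b ht
    rw [Complex.betaIntegral_eq_Gamma_mul_div _ _ (by simpa) (by simpa),
      intervalIntegral.integral_of_le ht.le, integral_Ioc_eq_integral_Ioo] at hC
    rw [← Complex.ofReal_inj, ← integral_complex_ofReal]
    refine Eq.trans (setIntegral_congr_fun measurableSet_Ioo fun s hs => ?_) (hC.trans ?_)
    · simp only [Complex.ofReal_mul, Complex.ofReal_cpow hs.1.le,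
        Complex.ofReal_cpow (sub_nonneg.2 hs.2.le), Complex.ofReal_sub, Complex.ofReal_one]
    · simp only [Complex.ofReal_mul, Complex.ofReal_div, Complex.ofReal_cpow ht.le,
        Complex.ofReal_sub, Complex.ofReal_one, Complex.ofReal_add, ← Complex.Gamma_ofReal]
  have hpos : 0 < t ^ (a + b - 1) * (Gamma a * Gamma b / Gamma (a + b)) := by
    have := Gamma_pos_of_pos ha
    have := Gamma_pos_of_pos hb
    have := Gamma_pos_of_pos (add_pos ha hb)
    positivity
  -- Integrability is read off from the nonzero value: the Bochner integral of a nonintegrable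
  -- function is zero.
  rw [← hval, ofReal_integral_eq_lintegral_ofReal]
  · exact Integrable.of_integral_ne_zero (hval ▸ hpos.ne')
  · refine ae_restrict_of_forall_mem measurableSet_Ioo fun s hs => ?_
    exact mul_nonneg (rpow_nonneg hs.1.le _) (rpow_nonneg (sub_nonneg.2 hs.2.le) _)

lemma lintegral_simplexDensity (h : ℝ) (hh : -1 < h) (n : ℕ) (t : ℝ) (ht : 0 < t) :
    ∫⁻ u, simplexDensity h n t u = ENNReal.ofReal
      (Gamma (1 + h) ^ n / Gamma (n * (1 + h) + 1) * t ^ ((n : ℝ) * (1 + h))) := by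
  induction n generalizing t with
  | zero =>
    have hmem : ∀ u : Fin 0 → ℝ, u ∈ openSimplex 0 t := fun u =>
      ⟨fun i => i.elim0, fun i => i.elim0⟩
    -- Lebesgue measure on the one-point space `Fin 0 → ℝ` is a unit point mass.
    have hvol : volume (Set.univ : Set (Fin 0 → ℝ)) = 1 := by
      rw [volume_pi, Measure.pi_of_empty]
      simp
    simp [simplexDensity, hmem, gapProd, hvol]
  | succ n ih =>
    have hb : 0 < 1 + h := by linarith
    have ha : 0 < (n : ℝ) * (1 + h) + 1 := by positivity
    have hG := Gamma_pos_of_pos hb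
    have hGn := Gamma_pos_of_pos ha
    have hc : 0 ≤ Gamma (1 + h) ^ n / Gamma (n * (1 + h) + 1) := by positivity
    rw [lintegral_simplexDensity_succ]
    calc
      _ = ∫⁻ s in Set.Ioo 0 t, ENNReal.ofReal (Gamma (1 + h) ^ n / Gamma (n * (1 + h) + 1)) *
            ENNReal.ofReal (s ^ ((n : ℝ) * (1 + h) + 1 - 1) * (t - s) ^ (1 + h - 1)) := by
        refine setLIntegral_congr_fun measurableSet_Ioo fun s hs => ?_
        rw [ih s hs.1, ← ENNReal.ofReal_mul (rpow_nonneg (sub_nonneg.2 hs.2.le) _),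
          ← ENNReal.ofReal_mul hc, add_sub_cancel_right, add_sub_cancel_left]
        congr 1
        ring
      _ = _ := by
        rw [lintegral_const_mul _ (by fun_prop), lintegral_beta_scaled ht ha hb,
          ← ENNReal.ofReal_mul hc]
        have e1 : (n : ℝ) * (1 + h) + 1 + (1 + h) - 1 = ((n + 1 : ℕ) : ℝ) * (1 + h) := by
          push_cast; ring
        have e2 : (n : ℝ) * (1 + h) + 1 + (1 + h) = ((n + 1 : ℕ) : ℝ) * (1 + h) + 1 := by
          push_cast; ring
        rw [e1, e2]
        congr 1
        rw [pow_succ]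
        field_simp

/-- For `t > 0`, `h > −1` and `n ≥ 1`,
`∫_{0<t₁<…<t_n<t} ∏_{j=1}^{n−1} (t_{j+1}−t_j)^h · (t−t_n)^h dt₁…dt_n
  = Γ(1+h)^n / Γ(n(1+h)+1) · t^{n(1+h)}`. -/
theorem stmt14 (t : ℝ) (ht : 0 < t) (h : ℝ) (hh : -1 < h) (n : ℕ) (hn : 1 ≤ n) :
    ∫ u in {u : Fin n → ℝ | StrictMono u ∧ ∀ i, u i ∈ Set.Ioo 0 t},
        ∏ j : Fin n,
          ((if hj : (j : ℕ) + 1 < n then u ⟨(j : ℕ) + 1, hj⟩ else t) - u j) ^ h =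
      Real.Gamma (1 + h) ^ n / Real.Gamma (n * (1 + h) + 1) * t ^ ((n : ℝ) * (1 + h)) := by
  change ∫ u in openSimplex n t, gapProd h n t u = _
  have hb : 0 < 1 + h := by linarith
  have hG := Gamma_pos_of_pos hb
  have hGn := Gamma_pos_of_pos (show 0 < (n : ℝ) * (1 + h) + 1 by positivity)
  rw [integral_eq_lintegral_of_nonneg_ae
      (ae_restrict_of_forall_mem (measurableSet_openSimplex n t) fun u hu => gapProd_nonneg h hu)
      (measurable_gapProd h n t).aestronglyMeasurable,
    ← lintegral_indicator (measurableSet_openSimplex n t)]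
  change (∫⁻ u, simplexDensity h n t u).toReal = _
  rw [lintegral_simplexDensity h hh n t ht, ENNReal.toReal_ofReal (by positivity)]
end
end

section
/- Let β > 0 and let μ be a tempered Borel measure on ℝ^d whose Fourier transform in the Parseval sense is a locally integrable function f : ℝ^d → [0,∞], and assume ∫_{ℝ^d} (1/(1+|ξ|²))^β μ(dξ) < ∞. Then for every η ∈ ℝ^d, (2π)^{-d} ∫_{ℝ^d} (1/(1+|ξ+η|²))^β μ(dξ) = ∫_{ℝ^d} e^{−iη·x} G_{d,β}(x) f(x) dx, where G_{d,β}(x) := (1/Γ(β)) ∫₀^∞ t^{β−1} e^{−t} p_{2t}(x) dt is the Bessel kernel and p_s(x) := (2πs)^{-d/2} e^{−|x|²/(2s)} is the Gaussian density; in particular the right-hand side integral is absolutely convergent and real. -/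
/-!
Test the Parseval identity against the modulated Gaussian `e^{-iη·x} p_{2t}(x)`, whose Fourier
transform is `e^{-t|ξ+η|²}` (`exists_schwartz`, `FTd_gauss`, `parseval_gauss`). Multiplying by
`t^{β-1} e^{-t}` and integrating over `t > 0` produces the Bessel kernel on one side and, by the
Gamma identity, `Γ(β) (1+|ξ+η|²)^{-β}` on the other.

Both interchanges of integrals are instances of Fubini's theorem. On the `μ` side absolute
convergence is the hypothesis on `μ`, transported by Peetre's inequality (`integrable_bessel`,
`integrable_prod_mu`). On the `f` side it follows from the unmodulated case `η = 0`, in which all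
terms are nonnegative (`integrable_prod_f`). A separate point is that a Gaussian times `f` is
integrable at all (`integrable_gauss_f`): the Parseval hypothesis does not assert this.
-/

open MeasureTheory Real
open scoped ENNReal RealInnerProductSpace

noncomputable section

/-- The Gaussian density `p_s(x) = (2πs)^{-d/2} e^{-|x|²/(2s)}`. -/
def gaussDens (d : ℕ) (s : ℝ) (x : Ed d) : ℝ :=
  (2 * π * s) ^ (-(d : ℝ) / 2) * Real.exp (-‖x‖ ^ 2 / (2 * s))

/-- The Bessel kernel `G_{d,β}(x) = Γ(β)⁻¹ ∫₀^∞ t^{β−1} e^{−t} p_{2t}(x) dt`. -/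
def besselKer (d : ℕ) (β : ℝ) (x : Ed d) : ℝ :=
  (Real.Gamma β)⁻¹ * ∫ t in Set.Ioi (0 : ℝ), t ^ (β - 1) * Real.exp (-t) * gaussDens d (2 * t) x

/-! ### Modulated Gaussians as Schwartz functions -/

lemma gauss_decay {a : ℝ} (ha : 0 < a) (M : ℕ) :
    ∃ B : ℝ, ∀ r : ℝ, 0 ≤ r → (1 + r) ^ M * Real.exp (-(a * r ^ 2)) ≤ B := by
  refine ⟨M.factorial * Real.exp (1 + 1 / (4 * a)), fun r hr => ?_⟩
  have h1 : (1 + r) ^ M ≤ M.factorial * Real.exp (1 + r) := by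
    have := Real.pow_div_factorial_le_exp (1 + r) (by positivity) M
    rwa [div_le_iff₀' (by positivity)] at this
  have h2 : (1 + r) + -(a * r ^ 2) ≤ 1 + 1 / (4 * a) := by
    -- completing the square in `r - a r²`
    have h3 : 1 / (4 * a) - (r - a * r ^ 2) = (2 * a * r - 1) ^ 2 / (4 * a) := by
      field_simp; ring
    have : 0 ≤ (2 * a * r - 1) ^ 2 / (4 * a) := by positivity
    linarith
  calc (1 + r) ^ M * Real.exp (-(a * r ^ 2))
      ≤ M.factorial * Real.exp (1 + r) * Real.exp (-(a * r ^ 2)) := by gcongr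
    _ = M.factorial * Real.exp ((1 + r) + -(a * r ^ 2)) := by rw [mul_assoc, ← Real.exp_add]
    _ ≤ _ := by gcongr

/-- The real Gaussian `e^{-a|x|²}` as a Schwartz function. The derivative bounds come from the
Faà di Bruno estimate, the exponent having polynomially bounded derivatives. -/
def gaussS (d : ℕ) (a : ℝ) (ha : 0 < a) : SchwartzMap (Ed d) ℝ where
  toFun x := Real.exp (-(a * ‖x‖ ^ 2))
  smooth' := by
    have := contDiff_norm_sq ℝ (E := Ed d) (n := ((⊤ : ℕ∞) : WithTop ℕ∞))
    fun_prop
  decay' := by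
    intro k n
    have hT : Function.HasTemperateGrowth (fun x : Ed d => -(a * ‖x‖ ^ 2)) := by
      have := Function.hasTemperateGrowth_norm_sq (H := Ed d)
      have h2 := ((Function.HasTemperateGrowth.const a).mul this).neg
      exact h2
    obtain ⟨m, C, hC, hb⟩ := hT.norm_iteratedFDeriv_le_uniform n
    obtain ⟨B, hB⟩ := gauss_decay ha (k + m * n)
    refine ⟨n.factorial * (1 + C) ^ n * B, fun x => ?_⟩
    have key := norm_iteratedFDeriv_comp_le (𝕜 := ℝ) (g := Real.exp)
      (f := fun x : Ed d => -(a * ‖x‖ ^ 2)) (n := n) (N := ((⊤ : ℕ∞) : WithTop ℕ∞))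
      Real.contDiff_exp hT.1 (mod_cast le_top) x
      (C := Real.exp (-(a * ‖x‖ ^ 2))) (D := (1 + C) * (1 + ‖x‖) ^ m)
      (by
        intro i _
        rw [norm_iteratedFDeriv_eq_norm_iteratedDeriv, iteratedDeriv_eq_iterate,
          Real.iter_deriv_exp, Real.norm_of_nonneg (Real.exp_pos _).le])
      (by
        intro i hi hin
        refine (hb i hin x).trans ?_
        have h1 : (1 : ℝ) ≤ (1 + C) * (1 + ‖x‖) ^ m :=
          one_le_mul_of_one_le_of_one_le (by linarith) (one_le_pow₀ (by simp))
        refine le_trans ?_ (le_self_pow₀ h1 (by omega))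
        gcongr
        simp)
    change ‖x‖ ^ k * ‖iteratedFDeriv ℝ n (Real.exp ∘ fun x : Ed d => -(a * ‖x‖ ^ 2)) x‖ ≤ _
    calc _ ≤ (1 + ‖x‖) ^ k * (n.factorial * Real.exp (-(a * ‖x‖ ^ 2)) *
          ((1 + C) * (1 + ‖x‖) ^ m) ^ n) := by
            gcongr
            simp
      _ = n.factorial * (1 + C) ^ n * ((1 + ‖x‖) ^ (k + m * n) * Real.exp (-(a * ‖x‖ ^ 2))) := by
            rw [mul_pow, ← pow_mul, pow_add]; ring
      _ ≤ _ := by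
            gcongr
            exact hB _ (norm_nonneg _)

/-- Characters are smooth with bounded derivatives, so multiplication by them preserves the
Schwartz space. -/
lemma hasTemperateGrowth_char (d : ℕ) (η : Ed d) :
    Function.HasTemperateGrowth
      (fun x : Ed d => Complex.exp (-(Complex.I * ((⟪η, x⟫ : ℝ) : ℂ)))) := by
  have hexp : Function.HasTemperateGrowth (fun u : ℝ => Complex.exp (-(Complex.I * (u : ℂ)))) := by
    have hder : ∀ n : ℕ, iteratedDeriv n (fun u : ℝ => Complex.exp (-(Complex.I * (u : ℂ)))) =
        fun u : ℝ => (-Complex.I) ^ n * Complex.exp (-(Complex.I * (u : ℂ))) := by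
      intro n
      induction n with
      | zero => simp
      | succ n ih =>
        rw [iteratedDeriv_succ, ih]
        ext u
        have h : HasDerivAt (fun u : ℝ => -(Complex.I * (u : ℂ))) (-(Complex.I * (1 : ℂ))) u :=
          (((hasDerivAt_id u).ofReal_comp).const_mul Complex.I).neg
        refine ((h.cexp.const_mul ((-Complex.I) ^ n)).congr_deriv ?_).deriv
        ring
    refine ⟨?_, fun n => ⟨0, 1, fun u => ?_⟩⟩
    · have : ContDiff ℝ ((⊤ : ℕ∞) : WithTop ℕ∞) (fun u : ℝ => (u : ℂ)) :=
        Complex.ofRealCLM.contDiff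
      fun_prop
    · rw [norm_iteratedFDeriv_eq_norm_iteratedDeriv, hder]
      simp [Complex.norm_exp]
  exact hexp.comp (Function.hasTemperateGrowth_inner_right η)

/-- The modulated Gaussian `e^{-iη·x} p_{2t}(x)` is a Schwartz function. -/
lemma exists_schwartz (d : ℕ) (η : Ed d) {t : ℝ} (ht : 0 < t) :
    ∃ φ : SchwartzMap (Ed d) ℂ, ∀ x, φ x =
      Complex.exp (-(Complex.I * ((⟪η, x⟫ : ℝ) : ℂ))) * ((gaussDens d (2 * t) x : ℝ) : ℂ) := by
  refine ⟨SchwartzMap.smulLeftCLM ℂ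
    (fun x : Ed d => Complex.exp (-(Complex.I * ((⟪η, x⟫ : ℝ) : ℂ))))
    (SchwartzMap.postcompCLM (𝕜 := ℝ) Complex.ofRealCLM
      (((2 * π * (2 * t)) ^ (-(d : ℝ) / 2)) • gaussS d (1 / (4 * t)) (by positivity))), fun x => ?_⟩
  rw [SchwartzMap.smulLeftCLM_apply_apply (hasTemperateGrowth_char d η), smul_eq_mul]
  congr 1
  simp only [gaussDens]
  change (((2 * π * (2 * t)) ^ (-(d : ℝ) / 2) * Real.exp (-(1 / (4 * t) * ‖x‖ ^ 2)) : ℝ) : ℂ) = _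
  congr 3
  field_simp
  ring

/-! ### The Fourier transform of a modulated Gaussian -/

lemma FTd_gauss (d : ℕ) (η ξ : Ed d) {t : ℝ} (ht : 0 < t) :
    FTd d (fun x => Complex.exp (-(Complex.I * ((⟪η, x⟫ : ℝ) : ℂ))) *
      ((gaussDens d (2 * t) x : ℝ) : ℂ)) ξ = ((Real.exp (-(t * ‖ξ + η‖ ^ 2)) : ℝ) : ℂ) := by
  have hb : 0 < (((1 / (4 * t) : ℝ) : ℂ)).re := by
    rw [Complex.ofReal_re]; positivity
  have key := GaussianFourier.integral_cexp_neg_mul_sq_norm_add hb (-Complex.I) (ξ + η)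
  have hpos : 0 < 2 * π * (2 * t) := by positivity
  have h1 : (fun x : Ed d => Complex.exp (-(Complex.I * ((⟪ξ, x⟫ : ℝ) : ℂ))) *
      (Complex.exp (-(Complex.I * ((⟪η, x⟫ : ℝ) : ℂ))) * ((gaussDens d (2 * t) x : ℝ) : ℂ))) =
      fun x => (((2 * π * (2 * t)) ^ (-(d : ℝ) / 2) : ℝ) : ℂ) *
        Complex.exp (-((1 / (4 * t) : ℝ) : ℂ) * ‖x‖ ^ 2 + -Complex.I * ((⟪ξ + η, x⟫ : ℝ) : ℂ)) := by
    ext x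
    rw [gaussDens, Complex.ofReal_mul, Complex.ofReal_exp]
    have hcomm : ∀ a b c e : ℂ, a * (b * (c * e)) = c * (a * b * e) := fun a b c e => by ring
    rw [hcomm, ← Complex.exp_add, ← Complex.exp_add]
    congr 2
    rw [inner_add_left]
    push_cast
    field_simp
    ring
  rw [FTd, h1, integral_const_mul, key, finrank_euclideanSpace, Fintype.card_fin]
  have h2 : ((π : ℂ) / ((1 / (4 * t) : ℝ) : ℂ)) ^ ((d : ℂ) / 2) =
      (((2 * π * (2 * t)) ^ ((d : ℝ) / 2) : ℝ) : ℂ) := by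
    rw [Complex.ofReal_cpow hpos.le]
    congr 1
    · push_cast; field_simp; ring
    · push_cast; rfl
  rw [h2, ← mul_assoc, ← Complex.ofReal_mul, ← Real.rpow_add hpos]
  rw [neg_div, neg_add_cancel, Real.rpow_zero, Complex.ofReal_one, one_mul, Complex.ofReal_exp]
  congr 1
  have htc : (t : ℂ) ≠ 0 := by exact_mod_cast ht.ne'
  push_cast
  rw [neg_sq, Complex.I_sq]
  field_simp

/-! ### Integrability with respect to the tempered measure -/

lemma integrable_of_lint {d : ℕ} {μ : Measure (Ed d)} {g : Ed d → ℝ} (hg : Continuous g)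
    (h0 : ∀ x, 0 ≤ g x) (h : ∫⁻ ξ, ENNReal.ofReal (g ξ) ∂μ < ⊤) : Integrable g μ :=
  ⟨hg.aestronglyMeasurable, by
    rwa [hasFiniteIntegral_iff_ofReal (Filter.Eventually.of_forall h0)]⟩

lemma continuous_bessel (d : ℕ) (β : ℝ) (η : Ed d) :
    Continuous (fun ξ : Ed d => (1 / (1 + ‖ξ + η‖ ^ 2)) ^ β) := by
  refine Continuous.rpow_const ?_ (fun x => Or.inl (by positivity))
  refine continuous_const.div (by fun_prop) (fun x => by positivity)

lemma norm_sq_shift {d : ℕ} (ξ η : Ed d) : ‖ξ‖ ^ 2 ≤ 2 * ‖ξ + η‖ ^ 2 + 2 * ‖η‖ ^ 2 := by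
  have h : ‖ξ‖ ≤ ‖ξ + η‖ + ‖η‖ := by simpa using norm_sub_le (ξ + η) η
  have h0 := norm_nonneg ξ
  nlinarith [sq_nonneg (‖ξ + η‖ - ‖η‖)]

/-- Translation invariance of the integrability condition, by Peetre's inequality
`1 + |ξ|² ≤ 2 (1 + |η|²) (1 + |ξ + η|²)`. -/
lemma integrable_bessel {d : ℕ} {β : ℝ} (hβ : 0 < β) {μ : Measure (Ed d)}
    (hH : ∫⁻ ξ, ENNReal.ofReal ((1 / (1 + ‖ξ‖ ^ 2)) ^ β) ∂μ < ⊤) (η : Ed d) :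
    Integrable (fun ξ : Ed d => (1 / (1 + ‖ξ + η‖ ^ 2)) ^ β) μ := by
  have h0 : Integrable (fun ξ : Ed d => (1 / (1 + ‖ξ‖ ^ 2)) ^ β) μ :=
    integrable_of_lint (by simpa using continuous_bessel d β 0) (fun x => by positivity) hH
  refine (h0.const_mul ((2 * (1 + ‖η‖ ^ 2)) ^ β)).mono'
    (continuous_bessel d β η).aestronglyMeasurable (Filter.Eventually.of_forall fun ξ => ?_)
  rw [Real.norm_of_nonneg (by positivity), ← Real.mul_rpow (by positivity) (by positivity)]
  refine Real.rpow_le_rpow (by positivity) ?_ hβ.le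
  rw [mul_one_div, div_le_div_iff₀ (by positivity) (by positivity)]
  nlinarith [norm_sq_shift ξ η, sq_nonneg (‖ξ + η‖), sq_nonneg (‖η‖),
    mul_nonneg (sq_nonneg (‖ξ + η‖)) (sq_nonneg (‖η‖))]

/-- Gaussians decay faster than any power, so they are integrable against a tempered measure. -/
lemma integrable_gauss_mu {d : ℕ} {μ : Measure (Ed d)} (hμt : IsTempered d μ) (η : Ed d)
    {t : ℝ} (ht : 0 < t) : Integrable (fun ξ : Ed d => Real.exp (-(t * ‖ξ + η‖ ^ 2))) μ := by
  obtain ⟨k, hk⟩ := hμt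
  have h0 : Integrable (fun ξ : Ed d => (1 + ‖ξ‖ ^ 2) ^ (-(k : ℝ))) μ := by
    refine integrable_of_lint ?_ (fun x => by positivity) hk
    exact Continuous.rpow_const (by fun_prop) (fun x => Or.inl (by positivity))
  refine (h0.const_mul ((2 / t) ^ k * k.factorial * Real.exp (t / 2 + t * ‖η‖ ^ 2))).mono'
    (by fun_prop) (Filter.Eventually.of_forall fun ξ => ?_)
  rw [Real.norm_of_nonneg (by positivity), Real.rpow_neg (by positivity), Real.rpow_natCast,
    ← div_eq_mul_inv, le_div_iff₀ (by positivity)]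
  have h1 := Real.pow_div_factorial_le_exp (t / 2 * (1 + ‖ξ‖ ^ 2)) (by positivity) k
  rw [div_le_iff₀' (by positivity), mul_pow] at h1
  have h2 : (1 + ‖ξ‖ ^ 2) ^ k ≤
      (2 / t) ^ k * (k.factorial * Real.exp (t / 2 * (1 + ‖ξ‖ ^ 2))) := by
    calc (1 + ‖ξ‖ ^ 2) ^ k = (2 / t) ^ k * ((t / 2) ^ k * (1 + ‖ξ‖ ^ 2) ^ k) := by
          rw [← mul_assoc, ← mul_pow]
          rw [show 2 / t * (t / 2) = 1 by field_simp]; simp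
      _ ≤ _ := by gcongr
  calc _ ≤ Real.exp (-(t * ‖ξ + η‖ ^ 2)) *
        ((2 / t) ^ k * (k.factorial * Real.exp (t / 2 * (1 + ‖ξ‖ ^ 2)))) := by gcongr
    _ = (2 / t) ^ k * k.factorial *
        Real.exp (-(t * ‖ξ + η‖ ^ 2) + t / 2 * (1 + ‖ξ‖ ^ 2)) := by rw [Real.exp_add]; ring
    _ ≤ _ := by
        refine mul_le_mul_of_nonneg_left (Real.exp_le_exp.2 ?_) (by positivity)
        nlinarith [mul_le_mul_of_nonneg_left (norm_sq_shift ξ η) ht.le]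

/-- Needed for Fubini: a compact set lies in a superlevel set of a `μ`-integrable Gaussian, so it
has finite measure. -/
lemma sigmaFinite_of_tempered {d : ℕ} {μ : Measure (Ed d)} (hμt : IsTempered d μ) :
    SigmaFinite μ := by
  have h := integrable_gauss_mu hμt 0 one_pos
  have : IsFiniteMeasureOnCompacts μ := by
    refine ⟨fun K hK => ?_⟩
    rcases K.eq_empty_or_nonempty with rfl | hne
    · simp
    obtain ⟨x, -, hx⟩ := hK.exists_isMinOn hne
      (f := fun ξ : Ed d => Real.exp (-(1 * ‖ξ + 0‖ ^ 2))) (by fun_prop)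
    refine lt_of_le_of_lt (measure_mono fun y hy => ?_)
      (h.measure_ge_lt_top (Real.exp_pos (-(1 * ‖x + 0‖ ^ 2))))
    exact hx hy
  infer_instance

/-! ### Gaussians against the function `f` -/

/-- If the integrand failed to be integrable, its Bochner integral would be `0` by convention, so
the Parseval identity would force the integral of a positive function against `μ` to vanish; then
`μ = 0`, and hence `f = 0` almost everywhere. -/
lemma integrable_gauss_f {d : ℕ} {μ : Measure (Ed d)} (hμt : IsTempered d μ)
    {f : Ed d → ℝ≥0∞} (hfm : Measurable f) (hfloc : LocIntENN d f) (hP : ParsevalFT d f μ)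
    {t : ℝ} (ht : 0 < t) :
    Integrable (fun x : Ed d => gaussDens d (2 * t) x * (f x).toReal) := by
  by_contra hni
  obtain ⟨φ, hφ⟩ := exists_schwartz d 0 ht
  have h1 := hP φ
  simp_rw [hφ, FTd_gauss d 0 _ ht] at h1
  simp only [inner_zero_left, Complex.ofReal_zero, mul_zero, neg_zero, Complex.exp_zero, one_mul,
    ← Complex.ofReal_mul] at h1
  rw [integral_complex_ofReal, integral_complex_ofReal, integral_undef hni] at h1
  have hi := integrable_gauss_mu hμt 0 ht
  have h2 : ∫ ξ, Real.exp (-(t * ‖ξ + 0‖ ^ 2)) ∂μ = 0 := by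
    have := (mul_eq_zero.1 h1.symm).resolve_left (by simp)
    exact_mod_cast this
  have hμ : μ = 0 := by
    rw [integral_eq_zero_iff_of_nonneg (fun ξ => (Real.exp_pos _).le) hi] at h2
    have h3 : ∀ᵐ ξ ∂μ, False := h2.mono fun ξ hξ => (Real.exp_pos _).ne' hξ
    simpa using h3
  have hloc : LocallyIntegrable (fun x => (f x).toReal) (volume : Measure (Ed d)) := by
    rw [locallyIntegrable_iff]
    intro K hK
    exact integrable_toReal_of_lintegral_ne_top hfm.aemeasurable (hfloc K hK).ne
  have hf0 : ∀ᵐ x : Ed d, (f x).toReal = 0 := by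
    refine ae_eq_zero_of_integral_contDiff_smul_eq_zero hloc fun g hg hgc => ?_
    have hgC : ContDiff ℝ ((⊤ : ℕ∞) : WithTop ℕ∞) (fun x => ((g x : ℝ) : ℂ)) :=
      Complex.ofRealCLM.contDiff.comp hg
    have hgc' : HasCompactSupport (fun x => ((g x : ℝ) : ℂ)) :=
      hgc.comp_left (g := fun u : ℝ => (u : ℂ)) Complex.ofReal_zero
    have h4 := hP (hgc'.toSchwartzMap hgC)
    rw [hμ] at h4
    simp only [HasCompactSupport.toSchwartzMap_toFun, integral_zero_measure, mul_zero] at h4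
    have h5 : ∫ x, ((g x * (f x).toReal : ℝ) : ℂ) = 0 := by
      rw [← h4]
      refine integral_congr_ae (Filter.Eventually.of_forall fun x => ?_)
      push_cast
      rfl
    rw [integral_complex_ofReal] at h5
    exact_mod_cast h5
  refine hni ((integrable_zero _ _ _).congr ?_)
  filter_upwards [hf0] with x hx
  simp [hx]

/-- The Parseval identity tested against the modulated Gaussian `e^{-iη·x} p_{2t}(x)`. -/
lemma parseval_gauss {d : ℕ} {μ : Measure (Ed d)} {f : Ed d → ℝ≥0∞} (hP : ParsevalFT d f μ)
    (η : Ed d) {t : ℝ} (ht : 0 < t) :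
    ∫ x : Ed d, Complex.exp (-(Complex.I * ((⟪η, x⟫ : ℝ) : ℂ))) *
        ((gaussDens d (2 * t) x * (f x).toReal : ℝ) : ℂ) =
      (((2 * π) ^ d : ℝ)⁻¹ : ℂ) * ((∫ ξ, Real.exp (-(t * ‖ξ + η‖ ^ 2)) ∂μ : ℝ) : ℂ) := by
  obtain ⟨φ, hφ⟩ := exists_schwartz d η ht
  have h1 := hP φ
  simp_rw [hφ, FTd_gauss d η _ ht] at h1
  rw [integral_complex_ofReal] at h1
  rw [← h1]
  refine integral_congr_ae (Filter.Eventually.of_forall fun x => ?_)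
  push_cast
  ring

/-! ### Absolute convergence of the double integrals -/

/-- The Gamma identity `∫₀^∞ t^{β-1} e^{-t} e^{-ts} dt = Γ(β) (1+s)^{-β}`. -/
lemma gamma_identity {β : ℝ} (hβ : 0 < β) {s : ℝ} (hs : 0 ≤ s) :
    ∫ t in Set.Ioi (0 : ℝ), t ^ (β - 1) * Real.exp (-t) * Real.exp (-(t * s)) =
      (1 / (1 + s)) ^ β * Real.Gamma β := by
  rw [← Real.integral_rpow_mul_exp_neg_mul_Ioi hβ (by positivity)]
  congr 1
  ext t
  rw [mul_assoc, ← Real.exp_add]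
  congr 2
  ring

lemma gamma_integrable {β : ℝ} (hβ : 0 < β) {s : ℝ} (hs : 0 ≤ s) :
    IntegrableOn (fun t : ℝ => t ^ (β - 1) * Real.exp (-t) * Real.exp (-(t * s)))
      (Set.Ioi (0 : ℝ)) := by
  -- a nonzero Bochner integral certifies integrability
  refine .of_integral_ne_zero ?_
  rw [gamma_identity hβ hs]
  have := Real.Gamma_pos_of_pos hβ
  positivity

lemma integrable_prod_mu {d : ℕ} {β : ℝ} (hβ : 0 < β) {μ : Measure (Ed d)} [SFinite μ]
    (hH : ∫⁻ ξ, ENNReal.ofReal ((1 / (1 + ‖ξ‖ ^ 2)) ^ β) ∂μ < ⊤) (η : Ed d) :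
    Integrable (fun p : Ed d × ℝ =>
      p.2 ^ (β - 1) * Real.exp (-p.2) * Real.exp (-(p.2 * ‖p.1 + η‖ ^ 2)))
      (μ.prod (volume.restrict (Set.Ioi (0 : ℝ)))) := by
  have hmeas : Measurable (fun p : Ed d × ℝ =>
      p.2 ^ (β - 1) * Real.exp (-p.2) * Real.exp (-(p.2 * ‖p.1 + η‖ ^ 2))) := by
    fun_prop
  rw [integrable_prod_iff hmeas.aestronglyMeasurable]
  refine ⟨Filter.Eventually.of_forall fun ξ =>
    gamma_integrable hβ (sq_nonneg ‖ξ + η‖), ?_⟩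
  have hnorm : ∀ ξ : Ed d, ∫ t in Set.Ioi (0 : ℝ),
      ‖t ^ (β - 1) * Real.exp (-t) * Real.exp (-(t * ‖ξ + η‖ ^ 2))‖ =
      (1 / (1 + ‖ξ + η‖ ^ 2)) ^ β * Real.Gamma β := by
    intro ξ
    rw [← gamma_identity hβ (sq_nonneg ‖ξ + η‖)]
    refine setIntegral_congr_fun measurableSet_Ioi fun t ht => ?_
    have ht' : (0 : ℝ) < t := ht
    exact Real.norm_of_nonneg (by positivity)
  simp only [hnorm]
  exact (integrable_bessel hβ hH η).mul_const (Real.Gamma β)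

lemma gaussDens_nonneg (d : ℕ) {s : ℝ} (hs : 0 < s) (x : Ed d) : 0 ≤ gaussDens d s x := by
  unfold gaussDens
  positivity

/-- Absolute convergence on the side of `f`. All factors are nonnegative, and the Parseval identity
with `η = 0` turns the inner integral over `x` into one against `μ`. -/
lemma integrable_prod_f {d : ℕ} {β : ℝ} (hβ : 0 < β) {μ : Measure (Ed d)} [SFinite μ]
    (hμt : IsTempered d μ)
    {f : Ed d → ℝ≥0∞} (hfm : Measurable f) (hfloc : LocIntENN d f) (hP : ParsevalFT d f μ)
    (hH : ∫⁻ ξ, ENNReal.ofReal ((1 / (1 + ‖ξ‖ ^ 2)) ^ β) ∂μ < ⊤) :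
    Integrable (fun p : Ed d × ℝ =>
      p.2 ^ (β - 1) * Real.exp (-p.2) * (gaussDens d (2 * p.2) p.1 * (f p.1).toReal))
      ((volume : Measure (Ed d)).prod (volume.restrict (Set.Ioi (0 : ℝ)))) := by
  have hmeas : Measurable (fun p : Ed d × ℝ =>
      p.2 ^ (β - 1) * Real.exp (-p.2) * (gaussDens d (2 * p.2) p.1 * (f p.1).toReal)) := by
    unfold gaussDens
    fun_prop
  rw [integrable_prod_iff' hmeas.aestronglyMeasurable]
  refine ⟨?_, ?_⟩
  · filter_upwards [ae_restrict_mem measurableSet_Ioi] with t ht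
    exact (integrable_gauss_f hμt hfm hfloc hP ht).const_mul _
  · have h := (integrable_prod_mu hβ hH 0).integral_prod_right.const_mul (((2 * π) ^ d : ℝ)⁻¹)
    refine h.congr ?_
    filter_upwards [ae_restrict_mem measurableSet_Ioi] with t ht
    have ht' : (0 : ℝ) < t := ht
    have h1 := parseval_gauss hP 0 ht'
    simp only [inner_zero_left, Complex.ofReal_zero, mul_zero, neg_zero, Complex.exp_zero,
      one_mul] at h1
    rw [integral_complex_ofReal] at h1
    have h2 : ∫ x, gaussDens d (2 * t) x * (f x).toReal =
        ((2 * π) ^ d : ℝ)⁻¹ * ∫ ξ, Real.exp (-(t * ‖ξ + 0‖ ^ 2)) ∂μ := by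
      exact_mod_cast h1
    have h3 : ∀ x : Ed d, ‖t ^ (β - 1) * Real.exp (-t) *
        (gaussDens d (2 * t) x * (f x).toReal)‖ =
        t ^ (β - 1) * Real.exp (-t) * (gaussDens d (2 * t) x * (f x).toReal) := fun x => by
      have := gaussDens_nonneg d (by positivity : 0 < 2 * t) x
      exact Real.norm_of_nonneg (by positivity)
    simp_rw [h3]
    rw [integral_const_mul, integral_const_mul, h2]
    ring

/-! ### The Bessel kernel identity -/

/-- For every `η ∈ ℝ^d`,
`(2π)^{-d} ∫ (1+|ξ+η|²)^{-β} μ(dξ) = ∫ e^{−iη·x} G_{d,β}(x) f(x) dx`, the right-hand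
side being absolutely convergent (and real). -/
theorem stmt17 (d : ℕ) (β : ℝ) (hβ : 0 < β)
    (μ : Measure (Ed d)) (hμt : IsTempered d μ)
    (f : Ed d → ℝ≥0∞) (hfm : Measurable f) (hfloc : LocIntENN d f)
    (hP : ParsevalFT d f μ)
    (hHolder : ∫⁻ ξ, ENNReal.ofReal ((1 / (1 + ‖ξ‖ ^ 2)) ^ β) ∂μ < ⊤)
    (η : Ed d) :
    Integrable (fun x : Ed d => Complex.exp (-(Complex.I * ((⟪η, x⟫ : ℝ) : ℂ))) *
        ((besselKer d β x * (f x).toReal : ℝ) : ℂ)) ∧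
      (((2 * π) ^ d : ℝ)⁻¹ : ℂ) *
          (((∫⁻ ξ, ENNReal.ofReal ((1 / (1 + ‖ξ + η‖ ^ 2)) ^ β) ∂μ).toReal : ℝ) : ℂ) =
        ∫ x : Ed d, Complex.exp (-(Complex.I * ((⟪η, x⟫ : ℝ) : ℂ))) *
          ((besselKer d β x * (f x).toReal : ℝ) : ℂ) := by
  have hσ := sigmaFinite_of_tempered hμt
  have hΓ : Real.Gamma β ≠ 0 := (Real.Gamma_pos_of_pos hβ).ne'
  have hreal := integrable_prod_f hβ hμt hfm hfloc hP hHolder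
  have hprod : Integrable (fun p : Ed d × ℝ =>
      Complex.exp (-(Complex.I * ((⟪η, p.1⟫ : ℝ) : ℂ))) *
      ((p.2 ^ (β - 1) * Real.exp (-p.2) * (gaussDens d (2 * p.2) p.1 * (f p.1).toReal) : ℝ) : ℂ))
      ((volume : Measure (Ed d)).prod (volume.restrict (Set.Ioi (0 : ℝ)))) := by
    refine hreal.ofReal.bdd_mul (c := 1) (by fun_prop) (Filter.Eventually.of_forall fun p => ?_)
    simp [Complex.norm_exp]
  have hinner : ∀ x : Ed d, ∫ t in Set.Ioi (0 : ℝ),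
      Complex.exp (-(Complex.I * ((⟪η, x⟫ : ℝ) : ℂ))) *
      ((t ^ (β - 1) * Real.exp (-t) * (gaussDens d (2 * t) x * (f x).toReal) : ℝ) : ℂ) =
      (Real.Gamma β : ℂ) * (Complex.exp (-(Complex.I * ((⟪η, x⟫ : ℝ) : ℂ))) *
        ((besselKer d β x * (f x).toReal : ℝ) : ℂ)) := by
    intro x
    rw [integral_const_mul, integral_complex_ofReal]
    simp_rw [← mul_assoc]
    rw [integral_mul_const, besselKer]
    push_cast
    have : (Real.Gamma β : ℂ) ≠ 0 := by exact_mod_cast hΓ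
    generalize (∫ t in Set.Ioi (0 : ℝ),
      t ^ (β - 1) * Real.exp (-t) * gaussDens d (2 * t) x) = J
    field_simp
  have hΓc : (Real.Gamma β : ℂ) ≠ 0 := by exact_mod_cast hΓ
  refine ⟨?_, ?_⟩
  · have h := hprod.integral_prod_left
    simp only [hinner] at h
    exact (integrable_const_mul_iff hΓc.isUnit _).1 h
  · apply mul_left_cancel₀ hΓc
    rw [← integral_const_mul]
    simp_rw [← hinner]
    rw [integral_integral_swap hprod]
    have hstep : ∀ t ∈ Set.Ioi (0 : ℝ), ∫ x : Ed d,
        Complex.exp (-(Complex.I * ((⟪η, x⟫ : ℝ) : ℂ))) *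
        ((t ^ (β - 1) * Real.exp (-t) * (gaussDens d (2 * t) x * (f x).toReal) : ℝ) : ℂ) =
        (((2 * π) ^ d : ℝ)⁻¹ : ℂ) *
          ((∫ ξ, t ^ (β - 1) * Real.exp (-t) * Real.exp (-(t * ‖ξ + η‖ ^ 2)) ∂μ : ℝ) : ℂ) := by
      intro t ht
      rw [integral_const_mul, Complex.ofReal_mul, mul_left_comm, ← parseval_gauss hP η ht,
        ← integral_const_mul]
      refine integral_congr_ae (Filter.Eventually.of_forall fun x => ?_)
      push_cast
      ring
    rw [setIntegral_congr_fun measurableSet_Ioi hstep, integral_const_mul, integral_complex_ofReal,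
      ← integral_integral_swap (integrable_prod_mu hβ hHolder η)]
    simp_rw [gamma_identity hβ (sq_nonneg _)]
    rw [integral_mul_const, integral_eq_lintegral_of_nonneg_ae
      (Filter.Eventually.of_forall fun ξ => by positivity)
      (continuous_bessel d β η).aestronglyMeasurable]
    push_cast
    ring
end
end
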